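/- (Consistency of the nonlocal operator with symmetrically truncated neighborhood.) There is an absolute constant C > 0 with the following property. Let δ > 0, r ∈ (0, δ], and let γ̃ satisfy the radial kernel conditions with horizon δ in dimension 2. Let m : ℝ² → [0,1] be measurable with m(−z) = m(z) for all z, m(z) = 1 for |z| ≤ r, and m(z) = 0 for |z| ≥ δ, and set D := ∫_{r ≤ |z| ≤ δ} |z|² γ̃(|z|) dz. Let x ∈ ℝ² and let u : ℝ² → ℝ be four times continuously differentiable on the closed ball B̄_δ(x), with M_j := sup_{|y−x|≤δ} ‖D^j u(y)‖ for j = 2, 4. Then |2∫_{ℝ²} (u(x+z) − u(x)) γ̃(|z|) m(z) dz − Δu(x)| ≤ C (δ² M₄ + D M₂). -/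

import Mathlib

open MeasureTheory Metric Set

noncomputable section

/-- Surface measure of the unit sphere in `ℝ^d`, expressed as `d` times the volume
of the unit ball. -/
def unitSphereArea (d : ℕ) : ℝ :=
  d * (volume (ball (0 : EuclideanSpace ℝ (Fin d)) 1)).toReal

/-- The radial kernel conditions with horizon `δ` in dimension `d`. -/
def RadialKernel (d : ℕ) (δ : ℝ) (γ : ℝ → ℝ) : Prop :=
  Measurable γ ∧ (∀ s, 0 < s → s < δ → 0 < γ s) ∧ (∀ s, δ ≤ s → γ s = 0) ∧
    IntegrableOn γ (Ioo 0 δ) ∧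
    unitSphereArea d * (∫ s in Ioo 0 δ, s ^ (d + 1) * γ s) = d

/-!
Since the weight `γ ‖z‖ * m z` is even, twice the integral of the first difference equals the
integral of the second difference, in which the odd Taylor terms cancel; it therefore agrees with
`D²u(x)(z, z)` up to `M₄ ‖z‖⁴ / 3`. Invariance under reflections makes the second-moment matrix of
a radial weight a multiple of the identity, and the normalization of `γ` makes that multiple `1`,
so integrating `D²u(x)(z, z)` against the untruncated kernel gives exactly the Laplacian. The
truncation costs at most `M₂ ‖z‖²`, and only where `m ≠ 1`, that is on the annulus `r ≤ ‖z‖ ≤ δ`.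
-/

open scoped Nat RealInnerProductSpace

section SecondDifference

variable {E F : Type*} [AddGroup E] [AddCommGroup F]

/-- The second-order central difference `u (x + z) - 2 u x + u (x - z)`, grouped as the sum of the
first differences in the directions `z` and `-z`, which is the form produced by symmetrizing
`∫ w z • (u (x + z) - u x)` under `z ↦ -z`. -/
def secondDifference (u : E → F) (x z : E) : F :=
  (u (x + z) - u x) + (u (x - z) - u x)

theorem smul_secondDifference_of_even [Module ℝ F] {w : E → ℝ} (hw : ∀ z, w (-z) = w z)
    (u : E → F) (x z : E) :
    w z • secondDifference u x z = w z • (u (x + z) - u x) + w (-z) • (u (x + -z) - u x) := by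
  rw [secondDifference, smul_add, hw, sub_eq_add_neg x z]

end SecondDifference

section Taylor

variable {E F : Type*} [NormedAddCommGroup E] [NormedSpace ℝ E] [NormedAddCommGroup F]
  [NormedSpace ℝ F] {s : Set E} {u : E → F} {x z : E} {n : ℕ} {M : ℝ}

theorem iteratedDerivWithin_comp_add_smul (hconv : Convex ℝ s) (hs : UniqueDiffOn ℝ s)
    (hu : ContDiffOn ℝ n u s) (hx : x ∈ s) (hxz : x + z ∈ s) {t : ℝ} (ht : t ∈ Icc (0 : ℝ) 1) :
    iteratedDerivWithin n (fun t : ℝ ↦ u (x + t • z)) (Icc 0 1) t =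
      iteratedFDerivWithin ℝ n u s (x + t • z) fun _ ↦ z := by
  have hmaps : MapsTo (fun t : ℝ ↦ x + t • z) (Icc 0 1) s := fun t ht ↦
    hconv.add_smul_mem hx hxz ht
  induction n generalizing t with
  | zero => simp
  | succ k ih =>
    have ih' : EqOn (iteratedDerivWithin k (fun t : ℝ ↦ u (x + t • z)) (Icc 0 1))
        (fun t ↦ iteratedFDerivWithin ℝ k u s (x + t • z) fun _ ↦ z) (Icc 0 1) :=
      fun t ht ↦ ih (hu.of_le (by norm_cast; lia)) ht
    rw [iteratedDerivWithin_succ, derivWithin_congr ih' (ih' ht)]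
    have hline : HasDerivWithinAt (fun t : ℝ ↦ x + t • z) z (Icc 0 1) t := by
      simpa using (((hasDerivAt_id t).smul_const z).const_add x).hasDerivWithinAt
    have hiter : HasFDerivWithinAt (iteratedFDerivWithin ℝ k u s)
        (fderivWithin ℝ (iteratedFDerivWithin ℝ k u s) s (x + t • z)) s (x + t • z) :=
      (hu.differentiableOn_iteratedFDerivWithin (by norm_cast; lia) hs _
        (hmaps ht)).hasFDerivWithinAt
    exact ((ContinuousMultilinearMap.apply ℝ (fun _ : Fin k ↦ E) F
      fun _ ↦ z).hasFDerivAt.comp_hasDerivWithinAt t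
        (hiter.comp_hasDerivWithinAt t hline hmaps)).derivWithin (uniqueDiffOn_Icc_zero_one t ht)

theorem norm_sub_sum_iteratedFDerivWithin_le (hconv : Convex ℝ s) (hs : UniqueDiffOn ℝ s)
    (hu : ContDiffOn ℝ (n + 1) u s) (hx : x ∈ s) (hxz : x + z ∈ s)
    (hM : ∀ y ∈ s, ‖iteratedFDerivWithin ℝ (n + 1) u s y‖ ≤ M) :
    ‖u (x + z) - ∑ k ∈ Finset.range (n + 1),
        (k ! : ℝ)⁻¹ • iteratedFDerivWithin ℝ k u s x fun _ ↦ z‖ ≤ M * ‖z‖ ^ (n + 1) / n ! := by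
  have hmaps : MapsTo (fun t : ℝ ↦ x + t • z) (Icc 0 1) s := fun t ht ↦
    hconv.add_smul_mem hx hxz ht
  have hline : ContDiffOn ℝ (n + 1) (fun t : ℝ ↦ u (x + t • z)) (Icc 0 1) :=
    hu.comp (by fun_prop) hmaps
  have hderiv : ∀ t ∈ Icc (0 : ℝ) 1,
      ‖iteratedDerivWithin (n + 1) (fun t : ℝ ↦ u (x + t • z)) (Icc 0 1) t‖ ≤
        M * ‖z‖ ^ (n + 1) := fun t ht ↦ by
    rw [iteratedDerivWithin_comp_add_smul hconv hs (mod_cast hu) hx hxz ht]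
    simpa using ContinuousMultilinearMap.le_mul_prod_of_opNorm_le_of_le
      (m := fun _ ↦ z) (hM _ (hmaps ht)) fun _ ↦ le_rfl
  have hcoeff : ∀ k ∈ Finset.range (n + 1),
      iteratedDerivWithin k (fun t : ℝ ↦ u (x + t • z)) (Icc 0 1) 0 =
        iteratedFDerivWithin ℝ k u s x fun _ ↦ z := fun k hk ↦ by
    have hk : (k : WithTop ℕ∞) ≤ n + 1 := by norm_cast; exact (Finset.mem_range.1 hk).le
    simpa using iteratedDerivWithin_comp_add_smul hconv hs (hu.of_le hk) hx hxz
      (left_mem_Icc.2 zero_le_one)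
  have htaylor := taylor_mean_remainder_bound zero_le_one hline (right_mem_Icc.2 zero_le_one) hderiv
  rw [taylor_within_apply, Finset.sum_congr rfl fun k hk ↦ by rw [hcoeff k hk]] at htaylor
  simpa using htaylor

theorem norm_secondDifference_sub_iteratedFDerivWithin_le (hconv : Convex ℝ s)
    (hs : UniqueDiffOn ℝ s) (hu : ContDiffOn ℝ 4 u s) (hx : x ∈ s) (hadd : x + z ∈ s)
    (hsub : x - z ∈ s) (hM : ∀ y ∈ s, ‖iteratedFDerivWithin ℝ 4 u s y‖ ≤ M) :
    ‖secondDifference u x z - iteratedFDerivWithin ℝ 2 u s x fun _ ↦ z‖ ≤ M * ‖z‖ ^ 4 / 3 := by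
  rw [sub_eq_add_neg] at hsub
  have hneg (k : ℕ) : (iteratedFDerivWithin ℝ k u s x fun _ ↦ -z) =
      (-1 : ℝ) ^ k • iteratedFDerivWithin ℝ k u s x fun _ ↦ z := by
    simpa using (iteratedFDerivWithin ℝ k u s x).map_smul_univ (fun _ ↦ (-1 : ℝ)) fun _ ↦ z
  have hu' : ContDiffOn ℝ ((3 : ℕ) + 1) u s := hu.of_le (by norm_num)
  have hplus := norm_sub_sum_iteratedFDerivWithin_le hconv hs hu' hx hadd hM
  have hminus := norm_sub_sum_iteratedFDerivWithin_le hconv hs hu' hx hsub hM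
  simp only [hneg, norm_neg] at hminus
  calc _ = ‖_ + _‖ := congrArg norm ?_
    _ ≤ _ := norm_add_le_of_le hplus hminus
    _ = M * ‖z‖ ^ 4 / 3 := by norm_num [Nat.factorial]; ring
  simp only [secondDifference, Finset.sum_range_succ, Finset.sum_range_zero,
    iteratedFDerivWithin_zero_apply, ← sub_eq_add_neg]
  norm_num [Nat.factorial]
  module

end Taylor

section SecondMoments

variable {E : Type*} [NormedAddCommGroup E] [InnerProductSpace ℝ E] [FiniteDimensional ℝ E]
  [MeasurableSpace E] [BorelSpace E] {ρ : ℝ → ℝ}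

theorem integral_radial_mul_inner_mul_inner_map (ρ : ℝ → ℝ) (U : E ≃ₗᵢ[ℝ] E) (a b : E) :
    ∫ z, ρ ‖z‖ * (⟪U a, z⟫ * ⟪U b, z⟫) = ∫ z, ρ ‖z‖ * (⟪a, z⟫ * ⟪b, z⟫) := by
  rw [← U.measurePreserving.integral_comp U.toHomeomorph.measurableEmbedding]
  simp only [LinearIsometryEquiv.norm_map, LinearIsometryEquiv.inner_map_map]

theorem integral_radial_mul_inner_mul_inner_of_inner_eq_zero (ρ : ℝ → ℝ) {a b : E}
    (hab : ⟪a, b⟫ = 0) : ∫ z, ρ ‖z‖ * (⟪a, z⟫ * ⟪b, z⟫) = 0 := by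
  have ha : (ℝ ∙ a)ᗮ.reflection a = -a :=
    Submodule.reflection_orthogonalComplement_singleton_eq_neg a
  have hb : (ℝ ∙ a)ᗮ.reflection b = b :=
    Submodule.reflection_mem_subspace_eq_self <|
      Submodule.mem_orthogonal_singleton_iff_inner_right.2 hab
  have h := integral_radial_mul_inner_mul_inner_map ρ (ℝ ∙ a)ᗮ.reflection a b
  simp only [ha, hb, inner_neg_left, neg_mul, mul_neg, integral_neg] at h
  linarith

theorem integral_radial_mul_inner_sq_eq_of_norm_eq (ρ : ℝ → ℝ) {a b : E} (hab : ‖a‖ = ‖b‖) :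
    ∫ z, ρ ‖z‖ * (⟪a, z⟫ * ⟪a, z⟫) = ∫ z, ρ ‖z‖ * (⟪b, z⟫ * ⟪b, z⟫) := by
  rw [← integral_radial_mul_inner_mul_inner_map ρ (ℝ ∙ (a - b))ᗮ.reflection a a,
    Submodule.reflection_sub hab]

theorem integrable_radial_mul_inner_mul_inner
    (hρ : Integrable fun z : E ↦ ‖z‖ ^ 2 * ρ ‖z‖) (a b : E) :
    Integrable fun z : E ↦ ρ ‖z‖ * (⟪a, z⟫ * ⟪b, z⟫) := by
  have hbdd : ∀ z : E, ‖⟪a, z⟫ * ⟪b, z⟫ / ‖z‖ ^ 2‖ ≤ ‖a‖ * ‖b‖ := fun z ↦ by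
    rw [norm_div, norm_mul, norm_pow, norm_norm]
    refine div_le_of_le_mul₀ (by positivity) (by positivity) ?_
    calc ‖⟪a, z⟫‖ * ‖⟪b, z⟫‖ ≤ (‖a‖ * ‖z‖) * (‖b‖ * ‖z‖) := by
          gcongr <;> exact norm_inner_le_norm _ _
      _ = ‖a‖ * ‖b‖ * ‖z‖ ^ 2 := by ring
  have hmeas : Measurable fun z : E ↦ ⟪a, z⟫ * ⟪b, z⟫ / ‖z‖ ^ 2 := by fun_prop
  refine (hρ.bdd_mul hmeas.aestronglyMeasurable (.of_forall hbdd)).congr (.of_forall fun z ↦ ?_)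
  rcases eq_or_ne z 0 with rfl | hz
  · simp
  · have := norm_ne_zero_iff.2 hz
    field_simp

variable {ι : Type*} [Fintype ι]

theorem card_mul_integral_radial_mul_inner_sq (b : OrthonormalBasis ι ℝ E)
    (hρ : Integrable fun z : E ↦ ‖z‖ ^ 2 * ρ ‖z‖) (i : ι) :
    Fintype.card ι * ∫ z, ρ ‖z‖ * (⟪b i, z⟫ * ⟪b i, z⟫) = ∫ z : E, ‖z‖ ^ 2 * ρ ‖z‖ := by
  calc Fintype.card ι * ∫ z, ρ ‖z‖ * (⟪b i, z⟫ * ⟪b i, z⟫)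
      = ∑ j, ∫ z, ρ ‖z‖ * (⟪b j, z⟫ * ⟪b j, z⟫) := by
        rw [Finset.sum_congr rfl fun j _ ↦ integral_radial_mul_inner_sq_eq_of_norm_eq ρ
          (show ‖b j‖ = ‖b i‖ by simp)]
        simp
    _ = ∫ z, ∑ j, ρ ‖z‖ * (⟪b j, z⟫ * ⟪b j, z⟫) :=
        (integral_finsetSum _ fun j _ ↦ integrable_radial_mul_inner_mul_inner hρ _ _).symm
    _ = ∫ z : E, ‖z‖ ^ 2 * ρ ‖z‖ := by
        congr with z
        rw [← Finset.mul_sum, ← b.sum_sq_norm_inner_right z, mul_comm]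
        simp [sq]

theorem card_smul_integral_radial_smul_bilinear {F : Type*} [NormedAddCommGroup F]
    [NormedSpace ℝ F] [CompleteSpace F] (b : OrthonormalBasis ι ℝ E)
    (hρ : Integrable fun z : E ↦ ‖z‖ ^ 2 * ρ ‖z‖) (L : E →L[ℝ] E →L[ℝ] F) :
    (Fintype.card ι : ℝ) • ∫ z, ρ ‖z‖ • L z z =
      (∫ z : E, ‖z‖ ^ 2 * ρ ‖z‖) • ∑ i, L (b i) (b i) := by
  have hexpand (z : E) : ρ ‖z‖ • L z z =
      ∑ i, ∑ j, (ρ ‖z‖ * (⟪b i, z⟫ * ⟪b j, z⟫)) • L (b j) (b i) := by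
    calc ρ ‖z‖ • L z z = ρ ‖z‖ • L (∑ i, ⟪b i, z⟫ • b i) (∑ j, ⟪b j, z⟫ • b j) := by
          rw [b.sum_repr']
      _ = _ := by
          simp only [map_sum, map_smul, sum_apply, smul_apply, Finset.smul_sum, smul_smul]
  have hint (i j : ι) :
      Integrable fun z ↦ (ρ ‖z‖ * (⟪b i, z⟫ * ⟪b j, z⟫)) • L (b j) (b i) :=
    (integrable_radial_mul_inner_mul_inner hρ _ _).smul_const _
  have hoff (i j : ι) (hij : j ≠ i) : ∫ z, ρ ‖z‖ * (⟪b i, z⟫ * ⟪b j, z⟫) = 0 :=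
    integral_radial_mul_inner_mul_inner_of_inner_eq_zero ρ (b.inner_eq_zero hij.symm)
  calc (Fintype.card ι : ℝ) • ∫ z, ρ ‖z‖ • L z z
      = (Fintype.card ι : ℝ) •
          ∑ i, ∑ j, (∫ z, ρ ‖z‖ * (⟪b i, z⟫ * ⟪b j, z⟫)) • L (b j) (b i) := by
        simp only [hexpand, ← integral_smul_const]
        rw [integral_finsetSum _ fun i _ ↦ integrable_finsetSum _ fun j _ ↦ hint i j]
        simp only [integral_finsetSum _ fun j _ ↦ hint _ j]
    _ = (Fintype.card ι : ℝ) •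
          ∑ i, (∫ z, ρ ‖z‖ * (⟪b i, z⟫ * ⟪b i, z⟫)) • L (b i) (b i) := by
        congr with i
        exact Fintype.sum_eq_single i fun j hij ↦ by rw [hoff i j hij, zero_smul]
    _ = (∫ z : E, ‖z‖ ^ 2 * ρ ‖z‖) • ∑ i, L (b i) (b i) := by
        simp only [Finset.smul_sum, smul_smul, card_mul_integral_radial_mul_inner_sq b hρ]

end SecondMoments

theorem norm_mul_smul_sub_smul_le {F : Type*} [NormedAddCommGroup F] [NormedSpace ℝ F]
    {c θ : ℝ} (hc : 0 ≤ c) (hθ : θ ∈ Icc (0 : ℝ) 1) (v w : F) :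
    ‖(c * θ) • v - c • w‖ ≤ c * ‖v - w‖ + (1 - θ) * (c * ‖w‖) := by
  obtain ⟨hθ0, hθ1⟩ := hθ
  calc ‖(c * θ) • v - c • w‖ = ‖(c * θ) • (v - w) - ((1 - θ) * c) • w‖ := by congr 1; module
    _ ≤ c * θ * ‖v - w‖ + (1 - θ) * c * ‖w‖ := by
        refine norm_sub_le_of_le ?_ ?_ <;> rw [norm_smul, Real.norm_of_nonneg]
        · positivity
        · exact mul_nonneg (sub_nonneg.2 hθ1) hc
    _ ≤ c * ‖v - w‖ + (1 - θ) * (c * ‖w‖) := by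
        rw [mul_assoc (1 - θ)]
        gcongr
        exact mul_le_of_le_one_right hc hθ1

section Symmetrization

variable {E F : Type*} [AddGroup E] [MeasurableSpace E] [MeasurableNeg E] [NormedAddCommGroup F]
  [NormedSpace ℝ F] {μ : Measure E} [μ.IsNegInvariant] {w : E → ℝ} {u : E → F} {x : E}

theorem integrable_smul_secondDifference (hw : ∀ z, w (-z) = w z)
    (hint : Integrable (fun z ↦ w z • (u (x + z) - u x)) μ) :
    Integrable (fun z ↦ w z • secondDifference u x z) μ := by
  simp only [smul_secondDifference_of_even hw]
  exact hint.add hint.comp_neg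

theorem integral_smul_secondDifference (hw : ∀ z, w (-z) = w z)
    (hint : Integrable (fun z ↦ w z • (u (x + z) - u x)) μ) :
    ∫ z, w z • secondDifference u x z ∂μ = (2 : ℝ) • ∫ z, w z • (u (x + z) - u x) ∂μ := by
  simp only [smul_secondDifference_of_even hw]
  rw [integral_add hint hint.comp_neg, integral_neg_eq_self fun z ↦ w z • (u (x + z) - u x),
    two_smul]

end Symmetrization

theorem uniqueDiffOn_closedBall {E : Type*} [NormedAddCommGroup E] [NormedSpace ℝ E] (x : E)
    {r : ℝ} (hr : 0 < r) : UniqueDiffOn ℝ (closedBall x r) :=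
  uniqueDiffOn_convex (convex_closedBall x r)
    ((nonempty_ball.2 hr).mono ball_subset_interior_closedBall)

namespace RadialKernel

variable {d : ℕ} {δ : ℝ} {γ : ℝ → ℝ} {F : Type*} [NormedAddCommGroup F] [NormedSpace ℝ F]

theorem nonneg (hγ : RadialKernel d δ γ) {s : ℝ} (hs : 0 < s) : 0 ≤ γ s := by
  obtain ⟨-, hpos, hzero, -, -⟩ := hγ
  rcases lt_or_ge s δ with h | h
  exacts [(hpos s hs h).le, (hzero s h).ge]

theorem eq_zero_of_le (hγ : RadialKernel d δ γ) {s : ℝ} (hs : δ ≤ s) : γ s = 0 :=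
  hγ.2.2.1 s hs

theorem norm_smul_secondDifference_sub_le (hγ : RadialKernel d δ γ) (hδ : 0 < δ) {r M₂ M₄ : ℝ}
    {x : EuclideanSpace ℝ (Fin d)} {u : EuclideanSpace ℝ (Fin d) → F}
    {m : EuclideanSpace ℝ (Fin d) → ℝ} (hm01 : ∀ z, m z ∈ Icc (0 : ℝ) 1)
    (hmr : ∀ z, ‖z‖ ≤ r → m z = 1) (hu : ContDiffOn ℝ 4 u (closedBall x δ))
    (hM₂ : ‖iteratedFDerivWithin ℝ 2 u (closedBall x δ) x‖ ≤ M₂)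
    (hM₄ : ∀ y ∈ closedBall x δ, ‖iteratedFDerivWithin ℝ 4 u (closedBall x δ) y‖ ≤ M₄)
    (z : EuclideanSpace ℝ (Fin d)) :
    ‖(γ ‖z‖ * m z) • secondDifference u x z -
        γ ‖z‖ • iteratedFDerivWithin ℝ 2 u (closedBall x δ) x fun _ ↦ z‖ ≤
      δ ^ 2 * M₄ / 3 * (‖z‖ ^ 2 * γ ‖z‖) +
        M₂ * {z | r ≤ ‖z‖ ∧ ‖z‖ ≤ δ}.indicator (fun z ↦ ‖z‖ ^ 2 * γ ‖z‖) z := by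
  set S := {z : EuclideanSpace ℝ (Fin d) | r ≤ ‖z‖ ∧ ‖z‖ ≤ δ}
  set H := iteratedFDerivWithin ℝ 2 u (closedBall x δ) x
  rcases eq_or_ne z 0 with rfl | hz
  · have hH0 : (H fun _ ↦ 0) = 0 := H.map_coord_zero 0 rfl
    simp [secondDifference, hH0, indicator]
  rcases le_or_gt δ ‖z‖ with hzδ | hzδ
  · simp [hγ.eq_zero_of_le hzδ, indicator]
  have hγz : 0 ≤ γ ‖z‖ := hγ.nonneg (norm_pos_iff.2 hz)
  have hM₂0 : 0 ≤ M₂ := (norm_nonneg _).trans hM₂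
  have hM₄0 : 0 ≤ M₄ := (norm_nonneg _).trans (hM₄ x (mem_closedBall_self hδ.le))
  have htaylor : γ ‖z‖ * ‖secondDifference u x z - H fun _ ↦ z‖ ≤
      δ ^ 2 * M₄ / 3 * (‖z‖ ^ 2 * γ ‖z‖) :=
    calc γ ‖z‖ * ‖secondDifference u x z - H fun _ ↦ z‖ ≤ γ ‖z‖ * (M₄ * ‖z‖ ^ 4 / 3) := by
          gcongr
          exact norm_secondDifference_sub_iteratedFDerivWithin_le (convex_closedBall x δ)
            (uniqueDiffOn_closedBall x hδ) hu (mem_closedBall_self hδ.le)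
            (by simpa using hzδ.le) (by simpa using hzδ.le) hM₄
      _ = ‖z‖ ^ 2 * M₄ / 3 * (‖z‖ ^ 2 * γ ‖z‖) := by ring
      _ ≤ δ ^ 2 * M₄ / 3 * (‖z‖ ^ 2 * γ ‖z‖) := by gcongr
  have htrunc : (1 - m z) * (γ ‖z‖ * ‖H fun _ ↦ z‖) ≤
      M₂ * S.indicator (fun z ↦ ‖z‖ ^ 2 * γ ‖z‖) z := by
    rcases le_or_gt ‖z‖ r with hzr | hzr
    · rw [hmr z hzr, sub_self, zero_mul]
      exact mul_nonneg hM₂0 (indicator_apply_nonneg fun _ ↦ by positivity)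
    · rw [indicator_of_mem (show z ∈ S from ⟨hzr.le, hzδ.le⟩)]
      have hHz : ‖H fun _ ↦ z‖ ≤ M₂ * ‖z‖ ^ 2 := by
        simpa using H.le_mul_prod_of_opNorm_le_of_le hM₂ (m := fun _ ↦ z) fun _ ↦ le_rfl
      calc (1 - m z) * (γ ‖z‖ * ‖H fun _ ↦ z‖) ≤ 1 * (γ ‖z‖ * (M₂ * ‖z‖ ^ 2)) := by
            gcongr
            linarith [(hm01 z).1]
        _ = M₂ * (‖z‖ ^ 2 * γ ‖z‖) := by ring
  exact (norm_mul_smul_sub_smul_le hγz (hm01 z) _ _).trans (add_le_add htaylor htrunc)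

variable [NeZero d]

theorem integral_norm_sq_mul (hγ : RadialKernel d δ γ) :
    ∫ z : EuclideanSpace ℝ (Fin d), ‖z‖ ^ 2 * γ ‖z‖ = d := by
  obtain ⟨-, -, hzero, -, hmoment⟩ := hγ
  have hpow (s : ℝ) : s ^ (d - 1) • (s ^ 2 * γ s) = s ^ (d + 1) * γ s := by
    have hd : d - 1 + 2 = d + 1 := by have := NeZero.pos d; lia
    rw [smul_eq_mul, ← mul_assoc, ← pow_add, hd]
  have htrunc : ∫ s in Ioi 0, s ^ (d + 1) * γ s = ∫ s in Ioo 0 δ, s ^ (d + 1) * γ s :=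
    setIntegral_eq_of_subset_of_forall_sdiff_eq_zero measurableSet_Ioi Ioo_subset_Ioi_self
      fun s hs ↦ by rw [hzero s (not_lt.1 fun h ↦ hs.2 ⟨hs.1, h⟩), mul_zero]
  rw [integral_fun_norm_addHaar volume fun s ↦ s ^ 2 * γ s, finrank_euclideanSpace_fin]
  simp only [hpow]
  rw [htrunc, nsmul_eq_mul, smul_eq_mul, ← mul_assoc]
  exact hmoment

theorem integrable_norm (hγ : RadialKernel d δ γ) :
    Integrable fun z : EuclideanSpace ℝ (Fin d) ↦ γ ‖z‖ := by
  obtain ⟨-, -, hzero, hint, -⟩ := hγ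
  rw [integrable_fun_norm_addHaar volume]
  have hIcc : IntegrableOn γ (Icc 0 δ) := by
    rwa [integrableOn_Icc_iff_integrableOn_Ioo]
  exact (hIcc.continuousOn_smul (by fun_prop) isCompact_Icc).of_forall_sdiff_eq_zero
    measurableSet_Ioi fun s hs ↦ by
      rw [hzero s (not_le.1 fun h ↦ hs.2 ⟨hs.1.le, h⟩).le, smul_zero]

theorem integrable_smul (hγ : RadialKernel d δ γ) {Q : EuclideanSpace ℝ (Fin d) → F}
    (hQ : ContinuousOn Q (closedBall 0 δ)) : Integrable fun z ↦ γ ‖z‖ • Q z := by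
  rw [← integrableOn_iff_integrable_of_support_subset (s := closedBall 0 δ)]
  · exact hγ.integrable_norm.integrableOn.smul_continuousOn hQ (isCompact_closedBall 0 δ)
  · refine Function.support_subset_iff'.2 fun z hz ↦ ?_
    rw [mem_closedBall_zero_iff, not_le] at hz
    rw [hγ.eq_zero_of_le hz.le, zero_smul]

theorem integrable_mul_smul (hγ : RadialKernel d δ γ) {m : EuclideanSpace ℝ (Fin d) → ℝ}
    (hm : Measurable m) (hm01 : ∀ z, m z ∈ Icc (0 : ℝ) 1) {Q : EuclideanSpace ℝ (Fin d) → F}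
    (hQ : ContinuousOn Q (closedBall 0 δ)) : Integrable fun z ↦ (γ ‖z‖ * m z) • Q z := by
  have hbdd : ∀ z, ‖m z‖ ≤ 1 := fun z ↦ by
    rw [Real.norm_of_nonneg (hm01 z).1]
    exact (hm01 z).2
  refine ((hγ.integrable_smul hQ).bdd_smul 1 hm.aestronglyMeasurable (.of_forall hbdd)).congr
    (.of_forall fun z ↦ ?_)
  simp only [Pi.smul_apply', smul_smul, mul_comm]

theorem integrable_norm_sq_mul (hγ : RadialKernel d δ γ) :
    Integrable fun z : EuclideanSpace ℝ (Fin d) ↦ ‖z‖ ^ 2 * γ ‖z‖ := by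
  simpa only [smul_eq_mul, mul_comm] using
    hγ.integrable_smul (Q := fun z ↦ ‖z‖ ^ 2) (by fun_prop)

theorem integral_smul_bilinear [CompleteSpace F] (hγ : RadialKernel d δ γ)
    (L : EuclideanSpace ℝ (Fin d) →L[ℝ] EuclideanSpace ℝ (Fin d) →L[ℝ] F) :
    ∫ z, γ ‖z‖ • L z z =
      ∑ i, L (EuclideanSpace.single i 1) (EuclideanSpace.single i 1) := by
  have h := card_smul_integral_radial_smul_bilinear (EuclideanSpace.basisFun (Fin d) ℝ)
    hγ.integrable_norm_sq_mul L
  rw [hγ.integral_norm_sq_mul, Fintype.card_fin] at h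
  simpa using smul_right_injective F (Nat.cast_ne_zero.2 (NeZero.ne d)) h

theorem integral_smul_iteratedFDerivWithin_two [CompleteSpace F] (hγ : RadialKernel d δ γ)
    (u : EuclideanSpace ℝ (Fin d) → F) {s : Set (EuclideanSpace ℝ (Fin d))}
    (hs : UniqueDiffOn ℝ s) {x : EuclideanSpace ℝ (Fin d)} (hx : x ∈ s) :
    ∫ z, γ ‖z‖ • iteratedFDerivWithin ℝ 2 u s x (fun _ ↦ z) =
      ∑ i, iteratedFDerivWithin ℝ 2 u s x
        ![EuclideanSpace.single i 1, EuclideanSpace.single i 1] := by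
  simp only [iteratedFDerivWithin_two_apply u hs hx]
  exact hγ.integral_smul_bilinear _

end RadialKernel

theorem stmt15_general {d : ℕ} [NeZero d] {F : Type*} [NormedAddCommGroup F] [NormedSpace ℝ F]
    [CompleteSpace F] {δ r : ℝ} (hδ : 0 < δ) {γ : ℝ → ℝ} (hγ : RadialKernel d δ γ)
    {m : EuclideanSpace ℝ (Fin d) → ℝ} (hm : Measurable m) (hm01 : ∀ z, m z ∈ Icc (0 : ℝ) 1)
    (hmneg : ∀ z, m (-z) = m z) (hmr : ∀ z, ‖z‖ ≤ r → m z = 1)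
    {x : EuclideanSpace ℝ (Fin d)} {u : EuclideanSpace ℝ (Fin d) → F}
    (hu : ContDiffOn ℝ 4 u (closedBall x δ)) {M₂ M₄ : ℝ}
    (hM₂ : ‖iteratedFDerivWithin ℝ 2 u (closedBall x δ) x‖ ≤ M₂)
    (hM₄ : ∀ y ∈ closedBall x δ, ‖iteratedFDerivWithin ℝ 4 u (closedBall x δ) y‖ ≤ M₄) :
    ‖(2 : ℝ) • (∫ z, (γ ‖z‖ * m z) • (u (x + z) - u x)) -
        ∑ i, iteratedFDerivWithin ℝ 2 u (closedBall x δ) x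
          ![EuclideanSpace.single i 1, EuclideanSpace.single i 1]‖ ≤
      d / 3 * (δ ^ 2 * M₄) +
        (∫ z in {z : EuclideanSpace ℝ (Fin d) | r ≤ ‖z‖ ∧ ‖z‖ ≤ δ}, ‖z‖ ^ 2 * γ ‖z‖) * M₂ := by
  set S := {z : EuclideanSpace ℝ (Fin d) | r ≤ ‖z‖ ∧ ‖z‖ ≤ δ}
  have hS : MeasurableSet S :=
    (measurableSet_le measurable_const measurable_norm).inter
      (measurableSet_le measurable_norm measurable_const)
  have hweven (z : EuclideanSpace ℝ (Fin d)) : γ ‖-z‖ * m (-z) = γ ‖z‖ * m z := by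
    rw [norm_neg, hmneg]
  have hdiff : ContinuousOn (fun z ↦ u (x + z) - u x) (closedBall 0 δ) :=
    (hu.continuousOn.comp (by fun_prop) fun z hz ↦ by simpa using hz).sub continuousOn_const
  have hint := hγ.integrable_mul_smul hm hm01 hdiff
  have hHess : Integrable fun z ↦
      γ ‖z‖ • iteratedFDerivWithin ℝ 2 u (closedBall x δ) x fun _ ↦ z :=
    hγ.integrable_smul (by fun_prop)
  have hmoment := hγ.integrable_norm_sq_mul.const_mul (δ ^ 2 * M₄ / 3)
  have htrunc := (hγ.integrable_norm_sq_mul.indicator hS).const_mul M₂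
  rw [← integral_smul_secondDifference hweven hint,
    ← hγ.integral_smul_iteratedFDerivWithin_two u (uniqueDiffOn_closedBall x hδ)
      (mem_closedBall_self hδ.le),
    ← integral_sub (integrable_smul_secondDifference hweven hint) hHess]
  calc _ ≤ ∫ z, (δ ^ 2 * M₄ / 3 * (‖z‖ ^ 2 * γ ‖z‖) +
          M₂ * S.indicator (fun z ↦ ‖z‖ ^ 2 * γ ‖z‖) z) :=
        norm_integral_le_of_norm_le (hmoment.add htrunc) <| .of_forall <|
          hγ.norm_smul_secondDifference_sub_le hδ hm01 hmr hu hM₂ hM₄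
    _ = d / 3 * (δ ^ 2 * M₄) + (∫ z in S, ‖z‖ ^ 2 * γ ‖z‖) * M₂ := by
        rw [integral_add hmoment htrunc, integral_const_mul, integral_const_mul,
          hγ.integral_norm_sq_mul, integral_indicator hS]
        ring

/-- consistency of the nonlocal operator with a symmetrically
truncated interaction neighborhood. -/
theorem stmt15 :
    ∃ C > 0, ∀ δ r : ℝ, 0 < δ → 0 < r → r ≤ δ →
      ∀ γ : ℝ → ℝ, RadialKernel 2 δ γ →
      ∀ m : EuclideanSpace ℝ (Fin 2) → ℝ, Measurable m →
        (∀ z, m z ∈ Icc (0 : ℝ) 1) → (∀ z, m (-z) = m z) →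
        (∀ z, ‖z‖ ≤ r → m z = 1) → (∀ z, δ ≤ ‖z‖ → m z = 0) →
      ∀ D : ℝ,
        D = (∫ z in {z : EuclideanSpace ℝ (Fin 2) | r ≤ ‖z‖ ∧ ‖z‖ ≤ δ},
          ‖z‖ ^ 2 * γ ‖z‖) →
      ∀ (x : EuclideanSpace ℝ (Fin 2)) (u : EuclideanSpace ℝ (Fin 2) → ℝ),
        ContDiffOn ℝ 4 u (closedBall x δ) →
      ∀ M₂ M₄ : ℝ,
        (∀ y ∈ closedBall x δ, ‖iteratedFDerivWithin ℝ 2 u (closedBall x δ) y‖ ≤ M₂) →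
        (∀ y ∈ closedBall x δ, ‖iteratedFDerivWithin ℝ 4 u (closedBall x δ) y‖ ≤ M₄) →
        |2 * (∫ z, (u (x + z) - u x) * (γ ‖z‖ * m z)) -
            ∑ i : Fin 2, iteratedFDerivWithin ℝ 2 u (closedBall x δ) x
              ![EuclideanSpace.single i 1, EuclideanSpace.single i 1]| ≤
          C * (δ ^ 2 * M₄ + D * M₂) := by
  refine ⟨1, one_pos, fun δ r hδ _ _ γ hγ m hm hm01 hmneg hmr _ D hD x u hu M₂ M₄ hM₂ hM₄ ↦ ?_⟩
  have hM₄0 : 0 ≤ M₄ := (norm_nonneg _).trans (hM₄ x (mem_closedBall_self hδ.le))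
  have h := stmt15_general hδ hγ hm hm01 hmneg hmr hu (hM₂ x (mem_closedBall_self hδ.le)) hM₄
  simp only [smul_eq_mul, mul_comm (γ _ * _), ← hD, Real.norm_eq_abs, Nat.cast_ofNat] at h
  linarith [mul_nonneg (sq_nonneg δ) hM₄0]
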